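/- Let t ≥ 2 be an integer, let a ∈ {1,…,t−1}, and let h ≥ 4t²+10t+24 be an integer. Set ℓ_0 = ⌈h/(t+1)⌉, ℓ_a = ⌈h/(t+a+1)⌉ and ℓ_t = ⌈h/(2t+1)⌉. Then (ℓ_0 − ℓ_a)(t − a) ≥ (ℓ_a − ℓ_t)·a, equivalently (t−a)·ℓ_0 + a·ℓ_t ≥ t·ℓ_a. -/

import Mathlib

/-- Ceiling division of natural numbers: `⌈a/b⌉`. -/
def ceilDiv (a b : ℕ) : ℕ := (a + b - 1) / b

theorem ceilDiv_lower (h b : ℕ) (hb : 0 < b) : h ≤ ceilDiv h b * b := by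
  unfold ceilDiv
  have h1 := Nat.div_add_mod (h + b - 1) b
  have h2 := Nat.mod_lt (h + b - 1) hb
  rw [mul_comm] at h1
  omega

theorem ceilDiv_upper (h b : ℕ) : ceilDiv h b * b ≤ h + b - 1 := by
  unfold ceilDiv
  exact Nat.div_mul_le_self _ _

theorem key_poly (x y : ℤ) (hx : 0 ≤ x) (hy : 0 ≤ y) (t a h : ℤ) (ha : a = 1 + x)
    (ht : t = x + y + 2) (hh : 4 * t ^ 2 + 10 * t + 24 ≤ h) :
    (t + 1) * (2 * t + 1) * (t + a) ≤ h * (a * (t - a)) := by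
  have h1 : 0 ≤ a * (t - a) := by
    subst ha ht
    apply mul_nonneg <;> linarith
  refine le_trans ?_ (mul_le_mul_of_nonneg_right hh h1)
  subst ha ht
  rw [← sub_nonneg]
  ring_nf
  positivity

theorem stmt9 (t a h : ℕ) (ht : 2 ≤ t) (ha1 : 1 ≤ a) (ha2 : a ≤ t - 1)
    (hh : 4 * t ^ 2 + 10 * t + 24 ≤ h) :
    ((ceilDiv h (t + 1) : ℤ) - (ceilDiv h (t + a + 1) : ℤ)) * ((t : ℤ) - (a : ℤ)) ≥
      ((ceilDiv h (t + a + 1) : ℤ) - (ceilDiv h (2 * t + 1) : ℤ)) * (a : ℤ) ∧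
    ((t : ℤ) - (a : ℤ)) * (ceilDiv h (t + 1) : ℤ) + (a : ℤ) * (ceilDiv h (2 * t + 1) : ℤ) ≥
      (t : ℤ) * (ceilDiv h (t + a + 1) : ℤ) := by
  have e0 := ceilDiv_lower h (t + 1) (by omega)
  have e1 := ceilDiv_lower h (2 * t + 1) (by omega)
  have e2 : ceilDiv h (t + a + 1) * (t + a + 1) ≤ h + t + a := by
    have := ceilDiv_upper h (t + a + 1)
    omega
  generalize ceilDiv h (t + 1) = p at *
  generalize ceilDiv h (2 * t + 1) = q at *
  generalize ceilDiv h (t + a + 1) = r at *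
  have hat : a + 1 ≤ t := by omega
  zify at *
  generalize (t : ℤ) = t at *
  generalize (a : ℤ) = a at *
  generalize (h : ℤ) = h at *
  generalize (p : ℤ) = p at *
  generalize (q : ℤ) = q at *
  generalize (r : ℤ) = r at *
  have key := key_poly (a - 1) (t - a - 1) (by linarith) (by linarith) t a h (by ring) (by ring) hh
  have main : t * r ≤ (t - a) * p + a * q := by
    have hD : 0 < (t + 1) * (t + a + 1) * (2 * t + 1) := by
      have : 0 < t + 1 := by linarith
      have : 0 < t + a + 1 := by linarith
      have : 0 < 2 * t + 1 := by linarith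
      positivity
    refine le_of_mul_le_mul_right ?_ hD
    have f0 := mul_le_mul_of_nonneg_right e0
      (show 0 ≤ (t - a) * ((t + a + 1) * (2 * t + 1)) from
        mul_nonneg (by linarith) (mul_nonneg (by linarith) (by linarith)))
    have f1 := mul_le_mul_of_nonneg_right e1
      (show 0 ≤ a * ((t + a + 1) * (t + 1)) from
        mul_nonneg (by linarith) (mul_nonneg (by linarith) (by linarith)))
    have f2 := mul_le_mul_of_nonneg_right e2
      (show 0 ≤ t * ((t + 1) * (2 * t + 1)) from
        mul_nonneg (by linarith) (mul_nonneg (by linarith) (by linarith)))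
    have f3 := mul_le_mul_of_nonneg_right key (show 0 ≤ t by linarith)
    linarith
  constructor
  · linarith
  · exact main
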